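/- Let f : ℕ → (0,∞) be non-decreasing with f(n) → ∞. Suppose there exist independent random variables U_1 and U_2 taking values in the positive integers, each with infinite support, such that E f(U_1) < ∞ and E f(U_2) < ∞ but E f(U_1 + U_2) = ∞. Then there exists an irreducible recurrent discrete-time Markov chain on a countable state space with two states 0 and 1 such that E f(T_11) < ∞ while E f(T_00) = ∞; in particular f does not belong to the class G. -/

import Mathlib

/-!
The counterexample is a chain on `Option ℕ`. The states `some n` form a line, descended
deterministically by one at each step down to `o = some 0`; `z = none` is an extra state.
From `o` the chain goes to `z` with probability `1/2` and otherwise jumps to `some k` with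
probability `u₂ (k + 1)`, which makes an excursion of length `U₂`; from `z` it jumps to `some k` with
probability proportional to `u₁ (k + 2)`, so that an excursion from `o` through `z` has the length of
`U₁` conditioned on `U₁ ≥ 2`. Hence the return time to `o` is a mixture of `U₂` and the conditioned
`U₁`, and has a finite `f`-moment. Started at `z`, on the other hand, the chain reaches `o`, makes
exactly one excursion of length `U₂` and steps to `z` with probability `1/4`, whence
`E f(T_zz) ≥ (1/4) E[f(U₁ + U₂); U₁ ≥ 2]` (`le_firstHit_none`).

Letting `z` be one step away from `o` inside the `U₁`-excursion matters: `E f(U₁ + 1)` may be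
infinite. The event `U₁ = 1` can be discarded because, by monotonicity and since `U₁ ≥ 2` has
positive probability, it contributes infinitely much only if its complement does
(`tsum_shift_eq_top`).

Recurrence and irreducibility both follow from the fact that every state is hit almost surely from
every state (`tsum_hitAvoid_lineChain`), which comes from solving the one-step equations
`tsum_hitAvoid_eq` for the hitting probabilities.
-/

open Filter
open scoped ENNReal

namespace MCPaper

variable {E : Type*}

open Classical in
/-- `hitAvoid P t a n x` is the probability that the chain with transition matrix `P`,
started at `x`, is at `t` at time `n` while avoiding both `t` and `a` at times `1,…,n-1`.
For `t = a` this is the distribution of the first hitting time of `t`. -/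
noncomputable def hitAvoid (P : E → E → ℝ≥0∞) (t a : E) : ℕ → E → ℝ≥0∞
  | 0, _ => 0
  | 1, x => P x t
  | n + 2, x => ∑' k : E, if k = t ∨ k = a then 0 else P x k * hitAvoid P t a (n + 1) k

/-- `firstHit P i j n = P_i(T_ij = n)`, the probability that the first hitting time of `j`
(first return time if `i = j`) starting from `i` equals `n`. -/
noncomputable def firstHit (P : E → E → ℝ≥0∞) (i j : E) (n : ℕ) : ℝ≥0∞ :=
  hitAvoid P j j n i

/-- `P` is a stochastic matrix. -/
def IsStochastic (P : E → E → ℝ≥0∞) : Prop := ∀ i, ∑' j : E, P i j = 1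

/-- irreducibility: any state can be reached from any other state. -/
def IsIrreducible (P : E → E → ℝ≥0∞) : Prop := ∀ i j : E, ∃ n : ℕ, 0 < firstHit P i j n

/-- recurrence: `P_i(T_ii < ∞) = 1` for every state `i`. -/
def IsRecurrent (P : E → E → ℝ≥0∞) : Prop := ∀ i : E, ∑' n : ℕ, firstHit P i i n = 1

/-- the generalized moment `E f(T_ij)` of the first hitting time of `j` from `i`. -/
noncomputable def momGen (f : ℕ → ℝ) (P : E → E → ℝ≥0∞) (i j : E) : ℝ≥0∞ :=
  ∑' n : ℕ, ENNReal.ofReal (f n) * firstHit P i j n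

/-- convolution of two probability mass functions on `ℕ`: the law of the sum of
independent random variables with laws `p` and `q`. -/
noncomputable def conv (p q : ℕ → ℝ≥0∞) (n : ℕ) : ℝ≥0∞ :=
  ∑ k ∈ Finset.range (n + 1), p k * q (n - k)

/-- `convPow p m` is the `m`-fold convolution power of `p`: the law of the sum of `m`
i.i.d. random variables with law `p` (the Dirac mass at `0` for `m = 0`). -/
noncomputable def convPow (p : ℕ → ℝ≥0∞) : ℕ → ℕ → ℝ≥0∞
  | 0 => fun n => if n = 0 then 1 else 0
  | m + 1 => conv (convPow p m) p

/-- the class `𝒢`: a finite generalized `f`-moment of the return time of one state implies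
finiteness for the return times of all states, for every irreducible recurrent chain. -/
def MemG (f : ℕ → ℝ) : Prop :=
  ∀ (S : Type) [Countable S] (P : S → S → ℝ≥0∞),
    IsStochastic P → IsIrreducible P → IsRecurrent P →
      ∀ i : S, momGen f P i i < ⊤ → ∀ j : S, momGen f P j j < ⊤

/-- the class `ℋ`: finiteness of `E f(T_ij)` and `E f(T_ji)` for a pair of states implies
finiteness of `E f(T_kl)` for all pairs, for every irreducible recurrent chain. -/
def MemH (f : ℕ → ℝ) : Prop :=
  ∀ (S : Type) [Countable S] (P : S → S → ℝ≥0∞),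
    IsStochastic P → IsIrreducible P → IsRecurrent P →
      ∀ i j : S, momGen f P i j < ⊤ → momGen f P j i < ⊤ →
        ∀ k l : S, momGen f P k l < ⊤

/-! ### Hitting probabilities of a general chain -/

lemma hitAvoid_self_add_two [DecidableEq E] (P : E → E → ℝ≥0∞) (j : E) (n : ℕ) (x : E) :
    hitAvoid P j j (n + 2) x
      = ∑' k : E, P x k * (if k = j then 0 else hitAvoid P j j (n + 1) k) := by
  rw [hitAvoid]
  refine tsum_congr fun k => ?_
  by_cases h : k = j <;> simp [h]

lemma tsum_mul_ite [DecidableEq E] (P : E → E → ℝ≥0∞) (x j : E) (g : E → ℝ≥0∞) :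
    P x j + ∑' k, P x k * (if k = j then 0 else g k)
      = ∑' k, P x k * (if k = j then 1 else g k) := by
  have h : P x j = ∑' k, (if k = j then P x k else 0) := by
    rw [tsum_ite_eq]
  rw [h, ← ENNReal.tsum_add]
  refine tsum_congr fun k => ?_
  by_cases h : k = j <;> simp [h]

/-- One-step analysis of the probability of ever hitting `j`. -/
lemma tsum_hitAvoid_eq [DecidableEq E] (P : E → E → ℝ≥0∞) (j x : E) :
    ∑' n, hitAvoid P j j n x
      = ∑' k, P x k * (if k = j then 1 else ∑' n, hitAvoid P j j n k) := by
  have h0 : ∀ y, ∑' n, hitAvoid P j j n y = ∑' n, hitAvoid P j j (n + 1) y := fun y => by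
    rw [tsum_eq_zero_add' ENNReal.summable]; simp [hitAvoid]
  rw [← tsum_mul_ite, h0, tsum_eq_zero_add' ENNReal.summable]
  congr 1
  simp only [add_assoc, Nat.reduceAdd, hitAvoid_self_add_two]
  rw [ENNReal.tsum_comm]
  refine tsum_congr fun k => ?_
  rw [ENNReal.tsum_mul_left]
  by_cases h : k = j
  · simp [h]
  · simp [h, h0 k]

lemma tsum_hitAvoid_le_one {P : E → E → ℝ≥0∞} (hP : IsStochastic P) (j x : E) :
    ∑' n, hitAvoid P j j n x ≤ 1 := by
  classical
  have key : ∀ N x, ∑ n ∈ Finset.range N, hitAvoid P j j (n + 1) x ≤ 1 := by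
    intro N
    induction N with
    | zero => simp
    | succ N ih =>
      intro x
      rw [Finset.sum_range_succ']
      simp only [add_assoc, Nat.reduceAdd, hitAvoid_self_add_two, zero_add]
      rw [← Summable.tsum_finsetSum (fun _ _ => ENNReal.summable), add_comm]
      have : ∀ k, ∑ n ∈ Finset.range N, P x k * (if k = j then 0 else hitAvoid P j j (n + 1) k)
          = P x k * (if k = j then 0 else ∑ n ∈ Finset.range N, hitAvoid P j j (n + 1) k) := by
        intro k
        rw [← Finset.mul_sum]
        by_cases h : k = j <;> simp [h]
      simp only [this]
      rw [hitAvoid, tsum_mul_ite]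
      refine le_trans (ENNReal.tsum_le_tsum fun k => ?_) (hP x).le
      by_cases h : k = j
      · simp [h]
      · simpa [h] using mul_le_mul_right (ih k) (P x k)
  rw [tsum_eq_zero_add' ENNReal.summable]
  simp only [hitAvoid, zero_add]
  rw [ENNReal.tsum_eq_iSup_nat]
  exact iSup_le fun N => key N x

/-! ### The chain -/

/-- The chain on `Option ℕ` in which `some (n + 1)` moves to `some n`, `some 0` moves to `none` with
probability `1/2` and to `some k` with probability `w k / 2`, and `none` moves to `some k` with
probability `v k`. -/
noncomputable def lineChain (v w : ℕ → ℝ≥0∞) : Option ℕ → Option ℕ → ℝ≥0∞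
  | none, none => 0
  | none, some k => v k
  | some 0, none => 2⁻¹
  | some 0, some k => 2⁻¹ * w k
  | some (_ + 1), none => 0
  | some (n + 1), some k => if k = n then 1 else 0

lemma tsum_option_nat (g : Option ℕ → ℝ≥0∞) : ∑' x, g x = g none + ∑' n, g (some n) := by
  rw [← (Equiv.optionEquivSumPUnit.{0} ℕ).symm.tsum_eq g,
    Summable.tsum_sum ENNReal.summable ENNReal.summable]
  simp [add_comm]

lemma tsum_lineChain_none (v w : ℕ → ℝ≥0∞) (g : Option ℕ → ℝ≥0∞) :
    ∑' x, lineChain v w none x * g x = ∑' k, v k * g (some k) := by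
  simp [tsum_option_nat, lineChain]

lemma tsum_lineChain_zero (v w : ℕ → ℝ≥0∞) (g : Option ℕ → ℝ≥0∞) :
    ∑' x, lineChain v w (some 0) x * g x
      = 2⁻¹ * g none + 2⁻¹ * ∑' k, w k * g (some k) := by
  simp [tsum_option_nat, lineChain, mul_assoc, ENNReal.tsum_mul_left]

lemma tsum_lineChain_succ (v w : ℕ → ℝ≥0∞) (g : Option ℕ → ℝ≥0∞) (n : ℕ) :
    ∑' x, lineChain v w (some (n + 1)) x * g x = g (some n) := by
  simp [tsum_option_nat, lineChain]

lemma lineChain_stochastic {v w : ℕ → ℝ≥0∞} (hv : ∑' k, v k = 1) (hw : ∑' k, w k = 1) :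
    IsStochastic (lineChain v w) := by
  rintro (_ | _ | n)
  · simpa [hv] using tsum_lineChain_none v w 1
  · simpa [hw, ENNReal.inv_two_add_inv_two] using tsum_lineChain_zero v w 1
  · simpa using tsum_lineChain_succ v w 1 n

/-- Every state is hit almost surely from every state. Unboundedness of the support of `w` makes the
high states on the line accessible. -/
lemma tsum_hitAvoid_lineChain {v w : ℕ → ℝ≥0∞} (hv : ∑' k, v k = 1) (hw : ∑' k, w k = 1)
    (hinf : ∀ m, ∃ N ≥ m, w N ≠ 0) (x j : Option ℕ) :
    ∑' n, hitAvoid (lineChain v w) j j n x = 1 := by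
  have hle := tsum_hitAvoid_le_one (lineChain_stochastic hv hw) j
  have heq := tsum_hitAvoid_eq (lineChain v w) j
  obtain ⟨ρ, hρ⟩ : ∃ ρ : Option ℕ → ℝ≥0∞,
      ∀ x, ∑' n, hitAvoid (lineChain v w) j j n x = ρ x := ⟨_, fun _ => rfl⟩
  simp only [hρ] at hle heq ⊢
  have e0 : ρ none = ∑' k, v k * (if some k = j then 1 else ρ (some k)) := by
    rw [heq, tsum_lineChain_none]
  have e1 : ρ (some 0) = 2⁻¹ * (if none = j then 1 else ρ none)
      + 2⁻¹ * ∑' k, w k * (if some k = j then 1 else ρ (some k)) := by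
    rw [heq, tsum_lineChain_zero]
  have e2 : ∀ n, ρ (some (n + 1)) = if some n = j then 1 else ρ (some n) := fun n => by
    rw [heq, tsum_lineChain_succ]
  have htop : ∀ x, ρ x ≠ ⊤ := fun x => ((hle x).trans_lt ENNReal.one_lt_top).ne
  -- The hitting probabilities from the line are at least that from `some 0`.
  have hge : ∀ k, ρ (some 0) ≤ if some k = j then 1 else ρ (some k) := by
    intro k
    induction k with
    | zero => split_ifs; exacts [hle _, le_rfl]
    | succ k ih => split_ifs; exacts [hle _, by rw [e2]; exact ih]
  have hnone_ge : ρ (some 0) ≤ ρ none := by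
    rw [e0]
    calc ρ (some 0) = ∑' k, v k * ρ (some 0) := by rw [ENNReal.tsum_mul_right, hv, one_mul]
      _ ≤ _ := ENNReal.tsum_le_tsum fun k => mul_le_mul_right (hge k) _
  have htwo : ((2 : ℝ≥0∞)⁻¹).toReal = 2⁻¹ := by simp
  have h0 : ρ (some 0) = 1 := by
    refine le_antisymm (hle _) ?_
    cases j with
    | none =>
      have hW : ρ (some 0) ≤ ∑' k, w k * (if some k = none then 1 else ρ (some k)) := by
        calc ρ (some 0) = ∑' k, w k * ρ (some 0) := by rw [ENNReal.tsum_mul_right, hw, one_mul]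
          _ ≤ _ := ENNReal.tsum_le_tsum fun k => mul_le_mul_right (hge k) _
      have h : 2⁻¹ * 1 + 2⁻¹ * ρ (some 0) ≤ ρ (some 0) := by
        conv_rhs => rw [e1, if_pos rfl]
        gcongr
      have h' := ENNReal.toReal_mono (htop _) h
      rw [ENNReal.toReal_add (by simp) (ENNReal.mul_ne_top (by simp) (htop _)),
        ENNReal.toReal_mul, ENNReal.toReal_mul, htwo, ENNReal.toReal_one] at h'
      rw [← ENNReal.toReal_le_toReal ENNReal.one_ne_top (htop _), ENNReal.toReal_one]
      linarith
    | some m =>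
      have hup : ∀ k, m ≤ k → (if some k = some m then 1 else ρ (some k)) = 1 := by
        intro k hk
        induction k, hk using Nat.le_induction with
        | base => simp
        | succ k hk ih =>
          split_ifs
          · rfl
          · rw [e2, ih]
      obtain ⟨N, hN, hwN⟩ := hinf m
      obtain ⟨s, hs⟩ : ∃ s, s = ∑' k, (if k = N then 0 else w k) := ⟨_, rfl⟩
      have hps : w N + s = 1 := by
        rw [hs, ← hw, ENNReal.tsum_eq_add_tsum_ite (f := w) N]
        congr!
      have hW : w N + s * ρ (some 0)
          ≤ ∑' k, w k * (if some k = some m then 1 else ρ (some k)) := by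
        rw [ENNReal.tsum_eq_add_tsum_ite N, hup N hN, mul_one, hs,
          ← ENNReal.tsum_mul_right]
        gcongr with k
        by_cases hk : k = N
        · simp [hk]
        · rw [if_neg hk, if_neg hk]
          exact mul_le_mul_right (hge k) _
      have h : 2⁻¹ * ρ (some 0) + 2⁻¹ * (w N + s * ρ (some 0)) ≤ ρ (some 0) := by
        conv_rhs => rw [e1, if_neg (by simp)]
        gcongr
      have hwt : w N ≠ ⊤ := fun h => by simp [h] at hps
      have hst : s ≠ ⊤ := fun h => by simp [h] at hps
      have hsa : s * ρ (some 0) ≠ ⊤ := ENNReal.mul_ne_top hst (htop _)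
      have h' := ENNReal.toReal_mono (htop _) h
      have hps' := congrArg ENNReal.toReal hps
      rw [ENNReal.toReal_add hwt hst, ENNReal.toReal_one] at hps'
      rw [ENNReal.toReal_add (ENNReal.mul_ne_top (by simp) (htop _))
          (ENNReal.mul_ne_top (by simp) (ENNReal.add_ne_top.2 ⟨hwt, hsa⟩)),
        ENNReal.toReal_mul, ENNReal.toReal_mul, ENNReal.toReal_add hwt hsa,
        ENNReal.toReal_mul, htwo] at h'
      rw [← ENNReal.toReal_le_toReal ENNReal.one_ne_top (htop _), ENNReal.toReal_one]
      have hpp := ENNReal.toReal_pos hwN hwt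
      have hs' : s.toReal = 1 - (w N).toReal := by linarith
      rw [hs'] at h'
      by_contra hcon
      push Not at hcon
      nlinarith
  cases x with
  | none => exact le_antisymm (hle _) (h0 ▸ hnone_ge)
  | some n =>
    induction n with
    | zero => exact h0
    | succ n ih => rw [e2, ih]; simp

/-! ### Return times to `some 0` and to `none` -/

lemma hitAvoid_zero_succ (v w : ℕ → ℝ≥0∞) (n k : ℕ) :
    hitAvoid (lineChain v w) (some 0) (some 0) (n + 1) (some (k + 1)) = if k = n then 1 else 0 := by
  induction k generalizing n with
  | zero =>
    cases n with
    | zero => simp [hitAvoid, lineChain]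
    | succ n => rw [hitAvoid_self_add_two, tsum_lineChain_succ]; simp
  | succ k ih =>
    cases n with
    | zero => simp [hitAvoid, lineChain]
    | succ n => rw [hitAvoid_self_add_two, tsum_lineChain_succ]; simp [ih]

lemma tsum_hitAvoid_zero (v w p : ℕ → ℝ≥0∞) (n : ℕ) :
    ∑' k, p k * (if some k = some 0 then 0 else
      hitAvoid (lineChain v w) (some 0) (some 0) (n + 1) (some k)) = p (n + 1) := by
  rw [tsum_eq_zero_add' ENNReal.summable]
  simp [hitAvoid_zero_succ]

lemma hitAvoid_zero_none (v w : ℕ → ℝ≥0∞) (n : ℕ) :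
    hitAvoid (lineChain v w) (some 0) (some 0) (n + 1) none = v n := by
  cases n with
  | zero => simp [hitAvoid, lineChain]
  | succ n =>
    rw [hitAvoid_self_add_two, tsum_lineChain_none]
    convert tsum_hitAvoid_zero v w v n

lemma firstHit_zero_one (v w : ℕ → ℝ≥0∞) :
    firstHit (lineChain v w) (some 0) (some 0) 1 = 2⁻¹ * w 0 := by
  simp [firstHit, hitAvoid, lineChain]

/-- An excursion from `some 0` goes through `none` or jumps directly onto the line. -/
lemma firstHit_zero (v w : ℕ → ℝ≥0∞) (n : ℕ) :
    firstHit (lineChain v w) (some 0) (some 0) (n + 2) = 2⁻¹ * v n + 2⁻¹ * w (n + 1) := by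
  rw [firstHit, hitAvoid_self_add_two, tsum_lineChain_zero]
  congr 2
  · simp [hitAvoid_zero_none]
  · convert tsum_hitAvoid_zero v w w n

lemma hitAvoid_none_line (v w : ℕ → ℝ≥0∞) (n k : ℕ) :
    hitAvoid (lineChain v w) none none (n + 1 + k) (some k)
      = hitAvoid (lineChain v w) none none (n + 1) (some 0) := by
  induction k with
  | zero => rfl
  | succ k ih =>
    rw [show n + 1 + (k + 1) = (n + k) + 2 by ring, hitAvoid_self_add_two, tsum_lineChain_succ,
      ← ih, show n + 1 + k = n + k + 1 by ring]
    simp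

/-- From `some 0`, the chain may make one excursion on the line and then step to `none`. -/
lemma le_hitAvoid_none_zero (v w : ℕ → ℝ≥0∞) (n : ℕ) :
    2⁻¹ * (2⁻¹ * w n) ≤ hitAvoid (lineChain v w) none none (n + 2) (some 0) := by
  rw [hitAvoid_self_add_two, tsum_lineChain_zero]
  refine le_trans ?_ le_add_self
  gcongr
  refine le_trans ?_ (ENNReal.le_tsum n)
  have h := hitAvoid_none_line v w 0 n
  rw [show 0 + 1 + n = n + 1 by ring] at h
  simp [h, hitAvoid, lineChain, mul_comm]

/-- The return time to `none` dominates, with weight `1/4`, the law of the time from `none` to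
`some 0`, followed by one excursion of law `u` on the line and by the step from `some 0` to
`none`. -/
lemma le_firstHit_none (v u : ℕ → ℝ≥0∞) (hu : u 0 = 0) (n : ℕ) :
    2⁻¹ * (2⁻¹ * conv v u n)
      ≤ firstHit (lineChain v fun k => u (k + 1)) none none (n + 2) := by
  have hlow : ∀ m, 2⁻¹ * (2⁻¹ * u m)
      ≤ hitAvoid (lineChain v fun k => u (k + 1)) none none (m + 1) (some 0) := by
    rintro (_ | m)
    · simp [hu]
    · exact le_hitAvoid_none_zero v (fun k => u (k + 1)) m
  rw [firstHit, hitAvoid_self_add_two, tsum_lineChain_none]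
  refine le_trans ?_ (ENNReal.sum_le_tsum (Finset.range (n + 1)))
  rw [conv, Finset.mul_sum, Finset.mul_sum]
  refine Finset.sum_le_sum fun k hk => ?_
  have hk' : n + 1 = (n - k) + 1 + k := by
    have := Finset.mem_range.1 hk
    omega
  rw [hk', hitAvoid_none_line]
  simp only [reduceCtorEq, if_false]
  calc 2⁻¹ * (2⁻¹ * (v k * u (n - k))) = v k * (2⁻¹ * (2⁻¹ * u (n - k))) := by ring
    _ ≤ _ := mul_le_mul_right (hlow _) _

/-! ### Moments of convolutions -/

lemma tsum_mul_conv (F p q : ℕ → ℝ≥0∞) :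
    ∑' n, F n * conv p q n = ∑' k, ∑' m, F (k + m) * (p k * q m) := by
  rw [← ENNReal.tsum_prod (f := fun k m => F (k + m) * (p k * q m)),
    ← Finset.HasAntidiagonal.sigmaAntidiagonalEquivProd.tsum_eq, ENNReal.tsum_sigma']
  refine tsum_congr fun n => ?_
  rw [tsum_fintype, Finset.univ_eq_attach]
  have h := Finset.sum_attach (Finset.HasAntidiagonal.antidiagonal n)
    (fun a : ℕ × ℕ => F (a.1 + a.2) * (p a.1 * q a.2))
  refine Eq.trans ?_ h.symm
  rw [Finset.Nat.sum_antidiagonal_eq_sum_range_succ_mk, conv, Finset.mul_sum]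
  refine Finset.sum_congr rfl fun k hk => ?_
  rw [Nat.add_sub_of_le (Nat.lt_succ_iff.1 (Finset.mem_range.1 hk))]

/-- If `E F(U₁ + U₂) = ∞`, then also `E[F(U₁ + U₂); U₁ ≥ 2] = ∞`. -/
lemma tsum_shift_eq_top (F p q : ℕ → ℝ≥0∞) (hF : Monotone F) (hp0 : p 0 = 0) (hp1 : p 1 ≠ ⊤)
    {N : ℕ} (hN : p (N + 2) ≠ 0) (hsum : ∑' n, F n * conv p q n = ⊤) :
    ∑' n, F (n + 2) * conv (fun k => p (k + 2)) q n = ⊤ := by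
  rw [tsum_mul_conv] at hsum
  rw [tsum_mul_conv (fun n => F (n + 2))]
  rw [tsum_eq_zero_add' ENNReal.summable] at hsum
  simp only [hp0, zero_mul, mul_zero, tsum_zero, zero_add] at hsum
  rw [tsum_eq_zero_add' ENNReal.summable, ENNReal.add_eq_top] at hsum
  simp only [zero_add] at hsum
  rcases hsum with h | h
  · have h1 : ∑' m, F (1 + m) * q m = ⊤ := by
      simp_rw [mul_left_comm (F _)] at h
      rw [ENNReal.tsum_mul_left, ENNReal.mul_eq_top] at h
      rcases h with h | h
      · exact h.2
      · exact absurd h.1 hp1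
    refine top_unique ?_
    calc ⊤ = p (N + 2) * ∑' m, F (1 + m) * q m := by rw [h1, ENNReal.mul_top hN]
      _ = ∑' m, F (1 + m) * (p (N + 2) * q m) := by
        rw [← ENNReal.tsum_mul_left]
        exact tsum_congr fun m => by ring
      _ ≤ ∑' m, F (N + m + 2) * (p (N + 2) * q m) := by
        refine ENNReal.tsum_le_tsum fun m => mul_le_mul_left (hF (by omega)) _
      _ ≤ _ := ENNReal.le_tsum (f := fun k => ∑' m, F (k + m + 2) * (p (k + 2) * q m)) N
  · rw [← h]
    refine tsum_congr fun k => tsum_congr fun m => ?_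
    rw [show k + 1 + 1 + m = k + m + 2 by ring]

theorem stmt_14 (f : ℕ → ℝ) (hpos : ∀ n, 0 < f n) (hmono : Monotone f)
    (htop : Tendsto f atTop atTop)
    (u₁ u₂ : ℕ → ℝ≥0∞) (h₁0 : u₁ 0 = 0) (h₂0 : u₂ 0 = 0)
    (h₁s : ∑' n : ℕ, u₁ n = 1) (h₂s : ∑' n : ℕ, u₂ n = 1)
    (h₁inf : {n : ℕ | u₁ n ≠ 0}.Infinite) (h₂inf : {n : ℕ | u₂ n ≠ 0}.Infinite)
    (h₁fin : ∑' n : ℕ, ENNReal.ofReal (f n) * u₁ n < ⊤)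
    (h₂fin : ∑' n : ℕ, ENNReal.ofReal (f n) * u₂ n < ⊤)
    (hsum : ∑' n : ℕ, ENNReal.ofReal (f n) * conv u₁ u₂ n = ⊤) :
    (∃ (S : Type) (_ : Countable S) (P : S → S → ℝ≥0∞) (z o : S),
        IsStochastic P ∧ IsIrreducible P ∧ IsRecurrent P ∧
          momGen f P o o < ⊤ ∧ momGen f P z z = ⊤) ∧
      ¬ MemG f := by
  suffices h : ∃ (S : Type) (_ : Countable S) (P : S → S → ℝ≥0∞) (z o : S),
      IsStochastic P ∧ IsIrreducible P ∧ IsRecurrent P ∧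
        momGen f P o o < ⊤ ∧ momGen f P z z = ⊤ by
    refine ⟨h, fun hG => ?_⟩
    obtain ⟨S, hS, P, z, o, hP, hirr, hrec, ho, hz⟩ := h
    exact (hG S P hP hirr hrec o ho z).ne hz
  obtain ⟨N, hN, hN2⟩ : ∃ N, u₁ N ≠ 0 ∧ 2 ≤ N := by
    obtain ⟨N, hN, h⟩ := h₁inf.exists_gt 1
    exact ⟨N, hN, h⟩
  obtain ⟨N, rfl⟩ := Nat.exists_eq_add_of_le' hN2
  -- `c = P(U₁ ≥ 2)`
  obtain ⟨c, hc⟩ : ∃ c, c = ∑' k, u₁ (k + 2) := ⟨_, rfl⟩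
  have hc0 : c ≠ 0 := fun h => hN (ENNReal.tsum_eq_zero.1 (hc ▸ h) N)
  have hc1 : c ≤ 1 := by
    rw [hc, ← h₁s]
    exact ENNReal.tsum_comp_le_tsum_of_injective (add_left_injective 2) u₁
  have hct : c ≠ ⊤ := (hc1.trans_lt ENNReal.one_lt_top).ne
  have hv : ∑' k, u₁ (k + 2) * c⁻¹ = 1 := by
    rw [ENNReal.tsum_mul_right, ← hc, ENNReal.mul_inv_cancel hc0 hct]
  have hw : ∑' k, u₂ (k + 1) = 1 := by
    rw [← h₂s, tsum_eq_zero_add' (f := u₂) ENNReal.summable, h₂0, zero_add]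
  have hinf : ∀ m, ∃ n ≥ m, u₂ (n + 1) ≠ 0 := by
    intro m
    obtain ⟨n, hn, h⟩ := h₂inf.exists_gt m
    obtain ⟨n, rfl⟩ := Nat.exists_eq_add_of_le' (Nat.one_le_of_lt h)
    exact ⟨n, Nat.lt_succ_iff.1 h, hn⟩
  have hhit := tsum_hitAvoid_lineChain hv hw hinf
  refine ⟨Option ℕ, inferInstance, lineChain (fun k => u₁ (k + 2) * c⁻¹) (fun k => u₂ (k + 1)),
    none, some 0, lineChain_stochastic hv hw, fun i j => ?_, fun i => hhit i i, ?_, ?_⟩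
  · by_contra! h
    have h0 : ∑' n, firstHit (lineChain (fun k => u₁ (k + 2) * c⁻¹) fun k => u₂ (k + 1)) i j n
        = 0 := ENNReal.tsum_eq_zero.2 fun n => le_zero_iff.1 (h n)
    exact zero_ne_one (h0.symm.trans (hhit i j))
  · have hle : momGen f (lineChain (fun k => u₁ (k + 2) * c⁻¹) fun k => u₂ (k + 1))
        (some 0) (some 0) ≤ ∑' n, (ENNReal.ofReal (f n) * u₁ n * c⁻¹
          + ENNReal.ofReal (f n) * u₂ n) := by
      have h2 : (2 : ℝ≥0∞)⁻¹ ≤ 1 := by simp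
      refine ENNReal.tsum_le_tsum fun n => ?_
      rw [mul_assoc, ← mul_add]
      refine mul_le_mul_right ?_ _
      rcases n with _ | _ | n
      · simp [firstHit, hitAvoid]
      · rw [firstHit_zero_one]
        exact (mul_le_of_le_one_left' h2).trans le_add_self
      · rw [firstHit_zero]
        exact add_le_add (mul_le_of_le_one_left' h2) (mul_le_of_le_one_left' h2)
    refine hle.trans_lt ?_
    rw [ENNReal.tsum_add, ENNReal.tsum_mul_right]
    exact ENNReal.add_lt_top.2 ⟨ENNReal.mul_lt_top h₁fin (ENNReal.inv_lt_top.2 hc0.bot_lt), h₂fin⟩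
  · have hu1 : u₁ 1 ≠ ⊤ :=
      (((ENNReal.le_tsum 1).trans h₁s.le).trans_lt ENNReal.one_lt_top).ne
    have key := tsum_shift_eq_top (fun n => ENNReal.ofReal (f n)) u₁ u₂
      (fun a b h => ENNReal.ofReal_le_ofReal (hmono h)) h₁0 hu1 hN hsum
    refine top_unique ?_
    calc ⊤ = 2⁻¹ * (2⁻¹ * ∑' n, ENNReal.ofReal (f (n + 2))
            * conv (fun k => u₁ (k + 2)) u₂ n) := by
          rw [key, ENNReal.mul_top (by simp), ENNReal.mul_top (by simp)]
      _ ≤ ∑' n, ENNReal.ofReal (f (n + 2)) * firstHit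
            (lineChain (fun k => u₁ (k + 2) * c⁻¹) fun k => u₂ (k + 1)) none none (n + 2) := by
          rw [← ENNReal.tsum_mul_left, ← ENNReal.tsum_mul_left]
          refine ENNReal.tsum_le_tsum fun n => ?_
          refine le_trans ?_ (mul_le_mul_right (le_firstHit_none _ u₂ h₂0 n) _)
          have hconv : conv (fun k => u₁ (k + 2)) u₂ n
              ≤ conv (fun k => u₁ (k + 2) * c⁻¹) u₂ n :=
            Finset.sum_le_sum fun k _ => mul_le_mul_left
              (le_mul_of_one_le_right' (ENNReal.one_le_inv.2 hc1)) _
          calc _ = ENNReal.ofReal (f (n + 2))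
                * (2⁻¹ * (2⁻¹ * conv (fun k => u₁ (k + 2)) u₂ n)) := by ring
            _ ≤ _ := by gcongr
      _ ≤ _ := ENNReal.tsum_comp_le_tsum_of_injective (add_left_injective 2) _

end MCPaper
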